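/- arXiv:2110.12699 — 2 statements merged into one kernel-verified Lean document; each statement's English description precedes it below -/
import Mathlib

section
/- The formula φ'_synch expresses synchronicity without Boolean disjunction: let o ∈ AP and φ'_synch := o ∧ G((o ∧ X¬o) ∨ (¬o ∧ Xo)). For every team T = (t_i)_{i∈ι} and every initial tef τ for ι: (T,τ) ⊨ φ'_synch if and only if τ(n)(i) = n for all n ∈ ℕ and i ∈ ι, and for all i ∈ ι and n ∈ ℕ: o ∈ t_i(n) ↔ n is even. -/
namespace TTS

abbrev Trace (AP : Type) := ℕ → Set AP

def IsStutTef {ι : Type} (τ : ℕ → ι → ℕ) : Prop :=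
  ∀ n i, τ n i ≤ τ (n + 1) i

def IsTef {ι : Type} (τ : ℕ → ι → ℕ) : Prop :=
  IsStutTef τ ∧ (∀ n, τ n ≠ τ (n + 1)) ∧ (∀ n i, τ (n + 1) i ≤ τ n i + 1)

def Initial {ι : Type} (τ : ℕ → ι → ℕ) : Prop := ∀ i, τ 0 i = 0

def shift {ι : Type} (τ : ℕ → ι → ℕ) (k : ℕ) : ℕ → ι → ℕ := fun n => τ (n + k)

inductive Formula (AP : Type) : Type
  | atom : AP → Formula AP
  | natom : AP → Formula AP
  | and : Formula AP → Formula AP → Formula AP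
  | or : Formula AP → Formula AP → Formula AP
  | X : Formula AP → Formula AP
  | U : Formula AP → Formula AP → Formula AP
  | W : Formula AP → Formula AP → Formula AP

def sat {AP : Type} : {ι : Type} → (ι → Trace AP) → (ℕ → ι → ℕ) → Formula AP → Prop
  | _, T, τ, .atom p => ∀ i, p ∈ T i (τ 0 i)
  | _, T, τ, .natom p => ∀ i, p ∉ T i (τ 0 i)
  | _, T, τ, .and φ ψ => sat T τ φ ∧ sat T τ ψ
  | ι, T, τ, .or φ ψ =>
      ∃ P : ι → Prop,
        sat (fun i : {i // P i} => T i.1) (fun n i => τ n i.1) φ ∧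
        sat (fun i : {i // ¬ P i} => T i.1) (fun n i => τ n i.1) ψ
  | _, T, τ, .X φ => sat T (shift τ 1) φ
  | _, T, τ, .U φ ψ =>
      ∃ k, sat T (shift τ k) ψ ∧ ∀ m, m < k → sat T (shift τ m) φ
  | _, T, τ, .W φ ψ =>
      ∀ k, sat T (shift τ k) φ ∨ ∃ m, m ≤ k ∧ sat T (shift τ m) ψ

def satE {AP ι : Type} (T : ι → Trace AP) (φ : Formula AP) : Prop :=
  ∃ τ : ℕ → ι → ℕ, IsTef τ ∧ Initial τ ∧ sat T τ φ

def satA {AP ι : Type} (T : ι → Trace AP) (φ : Formula AP) : Prop :=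
  ∀ τ : ℕ → ι → ℕ, IsTef τ → Initial τ → sat T τ φ

def satS {AP ι : Type} (T : ι → Trace AP) (φ : Formula AP) : Prop :=
  sat T (fun n _ => n) φ

def tshift {AP : Type} (t : Trace AP) (k : ℕ) : Trace AP := fun n => t (n + k)

def ltlSat {AP : Type} : Trace AP → Formula AP → Prop
  | t, .atom p => p ∈ t 0
  | t, .natom p => p ∉ t 0
  | t, .and φ ψ => ltlSat t φ ∧ ltlSat t ψ
  | t, .or φ ψ => ltlSat t φ ∨ ltlSat t ψ
  | t, .X φ => ltlSat (tshift t 1) φ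
  | t, .U φ ψ => ∃ k, ltlSat (tshift t k) ψ ∧ ∀ m, m < k → ltlSat (tshift t m) φ
  | t, .W φ ψ => ∀ k, ltlSat (tshift t k) φ ∨ ∃ m, m ≤ k ∧ ltlSat (tshift t m) ψ
/-- φ'_synch := o ∧ G((o ∧ X¬o) ∨ (¬o ∧ Xo)), where Gφ := φ W ⊥ and ⊥ := o ∧ ¬o. -/
def phiSynch' {AP : Type} (o : AP) : Formula AP :=
  .and (.atom o)
    (.W (.or (.and (.atom o) (.X (.natom o)))
             (.and (.natom o) (.X (.atom o))))
        (.and (.atom o) (.natom o)))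

/-!
The formula `phiSynch' o` is flat: a team satisfies it iff each of its traces, read along `τ`,
satisfies it as an LTL formula, which says that `o` holds at exactly the even positions of that
reading. Hence `o` changes its value at every step, so no trace can stand still; being allowed to
advance by at most one position at a time, each trace then advances by exactly one.
-/

/-- The trace that the `i`-th member of the team `T` displays when it is read along `τ`. -/
def reading {AP ι : Type} (T : ι → Trace AP) (τ : ℕ → ι → ℕ) (i : ι) : Trace AP :=
  fun n => T i (τ n i)

/-- Flatness of a formula: team satisfaction along `τ` amounts to LTL satisfaction by every trace
as read along `τ`. It is required of arbitrary `τ` because restricting a tef to a subteam, as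
disjunction does, can destroy strict monotonicity. -/
def IsFlat {AP : Type} (φ : Formula AP) : Prop :=
  ∀ (ι : Type) (T : ι → Trace AP) (τ : ℕ → ι → ℕ),
    sat T τ φ ↔ ∀ i, ltlSat (reading T τ i) φ

section Flatness

variable {AP : Type} {φ ψ : Formula AP}

theorem isFlat_atom (p : AP) : IsFlat (.atom p) := fun _ _ _ => Iff.rfl

theorem isFlat_natom (p : AP) : IsFlat (.natom p) := fun _ _ _ => Iff.rfl

theorem IsFlat.and (hφ : IsFlat φ) (hψ : IsFlat ψ) : IsFlat (.and φ ψ) := fun ι T τ =>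
  (and_congr (hφ ι T τ) (hψ ι T τ)).trans forall_and.symm

theorem IsFlat.or (hφ : IsFlat φ) (hψ : IsFlat ψ) : IsFlat (.or φ ψ) := by
  intro ι T τ
  constructor
  · rintro ⟨P, hP, hnP⟩ i
    by_cases hi : P i
    · exact Or.inl ((hφ _ _ _).1 hP ⟨i, hi⟩)
    · exact Or.inr ((hψ _ _ _).1 hnP ⟨i, hi⟩)
  · intro h
    exact ⟨fun i => ltlSat (reading T τ i) φ, (hφ _ _ _).2 fun i => i.2,
      (hψ _ _ _).2 fun i => (h i.1).resolve_left i.2⟩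

theorem IsFlat.next (hφ : IsFlat φ) : IsFlat (.X φ) := fun ι T τ => hφ ι T (shift τ 1)

theorem ltlSat_weakUntil_iff_of_unsat (hψ : ∀ t, ¬ ltlSat t ψ) (t : Trace AP) :
    ltlSat t (.W φ ψ) ↔ ∀ k, ltlSat (tshift t k) φ := by
  simp only [ltlSat, hψ, and_false, exists_false, or_false]

theorem IsFlat.weakUntil_of_unsat (hφ : IsFlat φ) (hψ : IsFlat ψ) (hunsat : ∀ t, ¬ ltlSat t ψ) :
    IsFlat (.W φ ψ) := by
  intro ι T τ
  have hφ_shift (k : ℕ) :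
      sat T (shift τ k) φ ↔ ∀ i, ltlSat (tshift (reading T τ i) k) φ := hφ ι T (shift τ k)
  simp only [ltlSat_weakUntil_iff_of_unsat hunsat]
  constructor
  · intro h i k
    rcases h k with hk | ⟨m, -, hm⟩
    · exact (hφ_shift k).1 hk i
    · exact absurd ((hψ _ _ _).1 hm i) (hunsat _)
  · intro h k
    exact Or.inl ((hφ_shift k).2 fun i => h i k)

end Flatness

theorem forall_iff_even_iff_alternating {p : ℕ → Prop} :
    (∀ n, p n ↔ Even n) ↔ p 0 ∧ ∀ n, p n ↔ ¬ p (n + 1) := by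
  constructor
  · intro h
    simp only [h, Even.zero, Nat.even_add_one, not_not, implies_true, and_self]
  · rintro ⟨h_zero, h_alt⟩ n
    induction n with
    | zero => simpa only [Even.zero, iff_true] using h_zero
    | succ n ih => rw [Nat.even_add_one, ← ih, h_alt n, not_not]

theorem apply_eq_self_of_unit_steps {f : ℕ → ℕ} (h_zero : f 0 = 0)
    (h_mono : ∀ n, f n ≤ f (n + 1)) (h_step : ∀ n, f (n + 1) ≤ f n + 1)
    (h_ne : ∀ n, f n ≠ f (n + 1)) (n : ℕ) : f n = n := by
  induction n with
  | zero => exact h_zero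
  | succ n ih =>
    have h_lt : f n < f (n + 1) := lt_of_le_of_ne (h_mono n) (h_ne n)
    exact (le_antisymm (h_step n) h_lt).trans (congrArg (· + 1) ih)

section PhiSynch

variable {AP ι : Type} (o : AP)

theorem not_ltlSat_contradiction (t : Trace AP) :
    ¬ ltlSat t (.and (.atom o) (.natom o)) := fun h => h.2 h.1

theorem isFlat_phiSynch' : IsFlat (phiSynch' o) := by
  have h_o : IsFlat (.atom o) := isFlat_atom o
  have h_not_o : IsFlat (.natom o) := isFlat_natom o
  exact h_o.and (((h_o.and h_not_o.next).or (h_not_o.and h_o.next)).weakUntil_of_unsat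
    (h_o.and h_not_o) (not_ltlSat_contradiction o))

theorem ltlSat_phiSynch'_iff (t : Trace AP) :
    ltlSat t (phiSynch' o) ↔ ∀ n, o ∈ t n ↔ Even n := by
  have h_flip (k : ℕ) :
      ltlSat (tshift t k) (.or (.and (.atom o) (.X (.natom o))) (.and (.natom o) (.X (.atom o)))) ↔
        (o ∈ t k ↔ o ∉ t (k + 1)) := by
    simp only [ltlSat, tshift, Nat.zero_add, Nat.add_comm 1 k]
    tauto
  rw [forall_iff_even_iff_alternating]
  exact and_congr Iff.rfl
    ((ltlSat_weakUntil_iff_of_unsat (not_ltlSat_contradiction o) t).trans (forall_congr' h_flip))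

theorem sat_phiSynch'_iff (T : ι → Trace AP) (τ : ℕ → ι → ℕ) :
    sat T τ (phiSynch' o) ↔ ∀ i n, o ∈ T i (τ n i) ↔ Even n :=
  (isFlat_phiSynch' o ι T τ).trans (forall_congr' fun i => ltlSat_phiSynch'_iff o (reading T τ i))

theorem phiSynch'_expresses_synchronicity_general (T : ι → Trace AP) {τ : ℕ → ι → ℕ}
    (hmono : IsStutTef τ) (hstep : ∀ n i, τ (n + 1) i ≤ τ n i + 1) (hinit : Initial τ) :
    sat T τ (phiSynch' o) ↔
      ((∀ n (i : ι), τ n i = n) ∧ ∀ (i : ι) n, o ∈ T i n ↔ Even n) := by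
  rw [sat_phiSynch'_iff]
  constructor
  · intro h
    have h_moves (i : ι) (n : ℕ) : τ n i ≠ τ (n + 1) i := by
      intro h_eq
      have h_parity : Even n ↔ Even (n + 1) := by rw [← h i n, ← h i (n + 1), h_eq]
      exact iff_not_self (h_parity.trans Nat.even_add_one)
    have h_sync (n : ℕ) (i : ι) : τ n i = n :=
      apply_eq_self_of_unit_steps (f := (τ · i)) (hinit i) (hmono · i) (hstep · i) (h_moves i) n
    exact ⟨h_sync, by simpa only [h_sync] using h⟩
  · rintro ⟨h_sync, h_even⟩
    simpa only [h_sync] using h_even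

end PhiSynch

/-- φ'_synch expresses synchronicity without Boolean disjunction. -/
theorem phiSynch'_expresses_synchronicity (AP ι : Type) (o : AP)
    (T : ι → Trace AP) (τ : ℕ → ι → ℕ) (hτ : IsTef τ) (hinit : Initial τ) :
    sat T τ (phiSynch' o) ↔
      ((∀ n (i : ι), τ n i = n) ∧ ∀ (i : ι) n, o ∈ T i n ↔ Even n) := by
  exact phiSynch'_expresses_synchronicity_general o T hτ.1 hτ.2.2 hinit

end TTS
end

section
/- Quantification over fair tefs via φ_fair: let o ∈ AP and φ_fair := A¹ G((o ∧ F¬o) ∨ (¬o ∧ Fo)). Let T = (t_i)_{i∈ι} be a team such that o ∈ t_i(n) iff n is even, for all i ∈ ι and n ∈ ℕ, let τ be a tef for ι, and let φ be any formula of TeamLTL extended with ⩔, NE, A¹ and the tef quantifiers ∃, ∀. Then (T,τ) ⊨ ∃(φ_fair ∧ φ) if and only if there exists a fair tef τ' for ι with τ'(0) = τ(0) and (T,τ') ⊨ φ. -/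
namespace TTS

def Fair {ι : Type} (τ : ℕ → ι → ℕ) : Prop :=
  ∀ (m : ℕ) (i : ι), ∃ n, m ≤ τ n i

/-- TeamLTL formulas extended with ⩔, NE, A¹ and the tef quantifiers ∃, ∀. -/
inductive QFormula (AP : Type) : Type
  | atom : AP → QFormula AP
  | natom : AP → QFormula AP
  | and : QFormula AP → QFormula AP → QFormula AP
  | or : QFormula AP → QFormula AP → QFormula AP
  | bor : QFormula AP → QFormula AP → QFormula AP
  | NE : QFormula AP
  | A1 : QFormula AP → QFormula AP
  | X : QFormula AP → QFormula AP
  | U : QFormula AP → QFormula AP → QFormula AP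
  | W : QFormula AP → QFormula AP → QFormula AP
  | Ex : QFormula AP → QFormula AP
  | All : QFormula AP → QFormula AP

def qsat {AP : Type} : {ι : Type} → (ι → Trace AP) → (ℕ → ι → ℕ) → QFormula AP → Prop
  | _, T, τ, .atom p => ∀ i, p ∈ T i (τ 0 i)
  | _, T, τ, .natom p => ∀ i, p ∉ T i (τ 0 i)
  | _, T, τ, .and φ ψ => qsat T τ φ ∧ qsat T τ ψ
  | ι, T, τ, .or φ ψ =>
      ∃ P : ι → Prop,
        qsat (fun i : {i // P i} => T i.1) (fun n i => τ n i.1) φ ∧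
        qsat (fun i : {i // ¬ P i} => T i.1) (fun n i => τ n i.1) ψ
  | _, T, τ, .bor φ ψ => qsat T τ φ ∨ qsat T τ ψ
  | ι, _, _, .NE => Nonempty ι
  | ι, T, τ, .A1 φ =>
      ∀ i : ι, qsat (fun j : {j // j = i} => T j.1) (fun n j => τ n j.1) φ
  | _, T, τ, .X φ => qsat T (shift τ 1) φ
  | _, T, τ, .U φ ψ =>
      ∃ k, qsat T (shift τ k) ψ ∧ ∀ m, m < k → qsat T (shift τ m) φ
  | _, T, τ, .W φ ψ =>
      ∀ k, qsat T (shift τ k) φ ∨ ∃ m, m ≤ k ∧ qsat T (shift τ m) ψ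
  | _, T, τ, .Ex φ =>
      ∃ τ', IsTef τ' ∧ (∀ i, τ' 0 i = τ 0 i) ∧ qsat T τ' φ
  | _, T, τ, .All φ =>
      ∀ τ', IsTef τ' → (∀ i, τ' 0 i = τ 0 i) → qsat T τ' φ
/-- ⊤ U φ and φ W ⊥ abbreviations, with ⊤ := o ∨ ¬o and ⊥ := o ∧ ¬o. -/
def F' {AP : Type} (o : AP) (φ : QFormula AP) : QFormula AP :=
  .U (.or (.atom o) (.natom o)) φ

def G' {AP : Type} (o : AP) (φ : QFormula AP) : QFormula AP :=
  .W φ (.and (.atom o) (.natom o))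

/-- φ_fair := A¹ G((o ∧ F¬o) ∨ (¬o ∧ Fo)). -/
def phiFair {AP : Type} (o : AP) : QFormula AP :=
  .A1 (G' o (.or (.and (.atom o) (F' o (.natom o)))
                 (.and (.natom o) (F' o (.atom o)))))

/-! Each step of a tef moves a coordinate by at most one, so a coordinate that tends to infinity
visits every position beyond its starting point; hence whatever happens infinitely often on the
trace happens infinitely often along the tef. A coordinate that does not tend to infinity is
eventually constant, and then so is the truth value of `o` along it. On a single trace, `φ_fair`
says precisely that `o` both holds and fails infinitely often along the tef. -/

open Filter

section Sequences

variable {s : ℕ → ℕ} {p : ℕ → Prop}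

theorem exists_eq_of_step_le_one (hstep : ∀ n, s (n + 1) ≤ s n + 1) {k l m : ℕ} (hkl : k ≤ l)
    (hk : s k ≤ m) (hl : m ≤ s l) : ∃ n ≥ k, s n = m := by
  induction l, hkl using Nat.le_induction with
  | base => exact ⟨k, le_rfl, hk.antisymm hl⟩
  | succ l hkl ih =>
    rcases le_or_gt m (s l) with hm | hm
    · exact ih hm
    · exact ⟨l + 1, by omega, ((hstep l).trans hm).antisymm hl⟩

theorem map_atTop_eq_of_step_le_one (hstep : ∀ n, s (n + 1) ≤ s n + 1)
    (hs : Tendsto s atTop atTop) : map s atTop = atTop := by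
  refine le_antisymm hs fun U hU => ?_
  obtain ⟨k, hk⟩ := mem_atTop_sets.mp (mem_map.mp hU)
  refine mem_atTop_sets.mpr ⟨s k, fun m hm => ?_⟩
  obtain ⟨l, hkl, hl⟩ := ((eventually_ge_atTop k).and (hs.eventually_ge_atTop m)).exists
  obtain ⟨n, hn, rfl⟩ := exists_eq_of_step_le_one hstep hkl hm hl
  exact hk n hn

theorem tendsto_atTop_of_frequently_of_frequently_not (hs : Monotone s)
    (hp : ∃ᶠ n in atTop, p (s n)) (hnp : ∃ᶠ n in atTop, ¬ p (s n)) : Tendsto s atTop atTop := by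
  refine (tendsto_atTop_of_monotone hs).resolve_right ?_
  rintro ⟨l, hl⟩
  have hconst : ∀ᶠ n in atTop, s n = l := by simpa only [nhds_discrete, tendsto_pure] using hl
  obtain ⟨n, hn, hnl⟩ := (hp.and_eventually hconst).exists
  obtain ⟨n', hn', hnl'⟩ := (hnp.and_eventually hconst).exists
  exact hn' (by rwa [hnl', ← hnl])

theorem tendsto_atTop_iff_frequently_and_frequently_not (hs : Monotone s)
    (hstep : ∀ n, s (n + 1) ≤ s n + 1) (hp : ∃ᶠ m in atTop, p m) (hnp : ∃ᶠ m in atTop, ¬ p m) :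
    Tendsto s atTop atTop ↔ (∃ᶠ n in atTop, p (s n)) ∧ ∃ᶠ n in atTop, ¬ p (s n) := by
  refine ⟨fun h => ?_, fun h => tendsto_atTop_of_frequently_of_frequently_not hs h.1 h.2⟩
  rw [← map_atTop_eq_of_step_le_one hstep h] at hp hnp
  exact ⟨hp, hnp⟩

theorem forall_exists_not_iff_iff_frequently :
    (∀ k, ∃ n, ¬ (p (n + k) ↔ p k)) ↔ (∃ᶠ n in atTop, p n) ∧ ∃ᶠ n in atTop, ¬ p n := by
  simp only [frequently_atTop]
  constructor
  · refine fun h => ⟨fun k => ?_, fun k => ?_⟩ <;> obtain ⟨n, hn⟩ := h k <;> by_cases hk : p k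
    · exact ⟨k, le_rfl, hk⟩
    · exact ⟨n + k, Nat.le_add_left k n, by tauto⟩
    · exact ⟨n + k, Nat.le_add_left k n, by tauto⟩
    · exact ⟨k, le_rfl, hk⟩
  · rintro ⟨hp, hnp⟩ k
    by_cases hk : p k
    · obtain ⟨n, hn, hpn⟩ := hnp k
      exact ⟨n - k, by rw [Nat.sub_add_cancel hn]; tauto⟩
    · obtain ⟨n, hn, hpn⟩ := hp k
      exact ⟨n - k, by rw [Nat.sub_add_cancel hn]; tauto⟩

end Sequences

section Teams

variable {AP ι : Type} {o : AP} {T : ι → Trace AP} {τ : ℕ → ι → ℕ}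

theorem IsStutTef.monotone (hτ : IsStutTef τ) (i : ι) : Monotone fun n => τ n i :=
  monotone_nat_of_le_succ fun n => hτ n i

theorem IsStutTef.fair_iff_tendsto (hτ : IsStutTef τ) :
    Fair τ ↔ ∀ i, Tendsto (fun n => τ n i) atTop atTop := by
  simp only [tendsto_atTop_atTop_iff_of_monotone (hτ.monotone _)]
  exact forall_comm

theorem qsat_F'_iff {φ : QFormula AP} :
    qsat T τ (F' o φ) ↔ ∃ k, qsat T (shift τ k) φ := by
  simp only [F', qsat]
  exact exists_congr fun k => and_iff_left fun m _ =>
    ⟨fun i => o ∈ T i (shift τ m 0 i), Subtype.property, Subtype.property⟩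

-- The empty team satisfies `⊥`, so there `G φ` holds for every `φ`, even for `NE`.
theorem qsat_G'_iff [Nonempty ι] {φ : QFormula AP} :
    qsat T τ (G' o φ) ↔ ∀ k, qsat T (shift τ k) φ := by
  simp only [G', qsat]
  exact forall_congr' fun k => or_iff_left fun ⟨_, _, ho, hno⟩ =>
    hno (Classical.arbitrary ι) (ho _)

theorem qsat_eventually_changes_iff [Unique ι] :
    qsat T τ (.or (.and (.atom o) (F' o (.natom o))) (.and (.natom o) (F' o (.atom o)))) ↔
      ∃ n, ¬ (o ∈ T default (τ n default) ↔ o ∈ T default (τ 0 default)) := by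
  simp only [qsat, qsat_F'_iff, shift, zero_add, Subtype.forall, Unique.forall_iff]
  constructor
  · rintro ⟨P, ⟨ho, n, hn⟩, hno, m, hm⟩
    by_cases hP : P default
    · exact ⟨n, by tauto⟩
    · exact ⟨m, by tauto⟩
  · rintro ⟨n, hn⟩
    exact ⟨fun _ => o ∈ T default (τ 0 default), ⟨id, n, by tauto⟩, id, n, by tauto⟩

theorem qsat_phiFair_iff_frequently :
    qsat T τ (phiFair o) ↔
      ∀ i, (∃ᶠ n in atTop, o ∈ T i (τ n i)) ∧ ∃ᶠ n in atTop, o ∉ T i (τ n i) := by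
  rw [phiFair, qsat]
  refine forall_congr' fun i => ?_
  rw [qsat_G'_iff, ← forall_exists_not_iff_iff_frequently]
  refine forall_congr' fun k => qsat_eventually_changes_iff.trans ?_
  simp only [shift, zero_add]
  rfl

theorem qsat_phiFair_iff_fair (hτ : IsStutTef τ) (hstep : ∀ n i, τ (n + 1) i ≤ τ n i + 1)
    (ho : ∀ i, (∃ᶠ n in atTop, o ∈ T i n) ∧ ∃ᶠ n in atTop, o ∉ T i n) :
    qsat T τ (phiFair o) ↔ Fair τ := by
  rw [qsat_phiFair_iff_frequently, hτ.fair_iff_tendsto]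
  exact forall_congr' fun i => (tendsto_atTop_iff_frequently_and_frequently_not (p := (o ∈ T i ·))
    (hτ.monotone i) (hstep · i) (ho i).1 (ho i).2).symm

theorem quantify_fair_tefs_general
    (ho : ∀ i, (∃ᶠ n in atTop, o ∈ T i n) ∧ ∃ᶠ n in atTop, o ∉ T i n)
    (τ : ℕ → ι → ℕ) (φ : QFormula AP) :
    qsat T τ (.Ex (.and (phiFair o) φ)) ↔
      ∃ τ' : ℕ → ι → ℕ, IsTef τ' ∧ Fair τ' ∧ (∀ i, τ' 0 i = τ 0 i) ∧ qsat T τ' φ := by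
  simp only [qsat]
  refine exists_congr fun τ' => and_congr_right fun hτ' => ?_
  rw [qsat_phiFair_iff_fair hτ'.1 hτ'.2.2 ho, and_left_comm]

end Teams

/-- Quantification over fair tefs via φ_fair: on teams alternating on o,
∃(φ_fair ∧ φ) holds iff some fair tef with the same initial values satisfies φ. -/
theorem quantify_fair_tefs (AP ι : Type) (o : AP) (T : ι → Trace AP)
    (halt : ∀ (i : ι) (n : ℕ), o ∈ T i n ↔ Even n)
    (τ : ℕ → ι → ℕ) (hτ : IsTef τ) (φ : QFormula AP) :
    qsat T τ (.Ex (.and (phiFair o) φ)) ↔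
      ∃ τ' : ℕ → ι → ℕ, IsTef τ' ∧ Fair τ' ∧ (∀ i, τ' 0 i = τ 0 i) ∧
        qsat T τ' φ :=
  quantify_fair_tefs_general (fun i => by
    simpa only [halt, Nat.not_even_iff_odd] using ⟨Nat.frequently_even, Nat.frequently_odd⟩) τ φ

end TTS
end
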